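/- Let F be a Frobenius manifold potential on M and set F^α := η^{αμ} ∂F/∂t^μ for 1 ≤ α ≤ N. Then a function F^o, analytic on M×U, satisfies the open WDVV equations together with the unit condition if and only if the (N+1)-tuple (F^1,…,F^N,F^o), regarded as functions of (t^1,…,t^N,t^{N+1}) with t^{N+1} = s, is a vector potential of a flat F-manifold on M×U. -/

import Mathlib

/-!
Write `H^a_{bc} = ∂_b ∂_c F^a` for the Hessians of the tuple `(F^1, …, F^N, F^o)` and
`G = H^{N+1}` for that of `F^o`. For `α ≤ N` the function `F^α` does not depend on `s`, so
`H^α_{bc}` vanishes as soon as `b` or `c` is `N + 1`, while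
`H^α_{βγ} = η^{αμ} ∂_μ ∂_β ∂_γ F` otherwise (`hess_vec`).

The associativity equation with free indices `(a, b, c, d)` is then examined according to which of
them equal `N + 1`:
* for `a ≤ N` it is WDVV contracted with `η⁻¹`, or `0 = 0`;
* for `a = N + 1` and `b, c, d ≤ N` it is the first open WDVV equation;
* for `a = N + 1` and exactly one of `b, c` equal to `N + 1`, with `d ≤ N`, it is the second open
  WDVV equation;
* in the remaining cases both sides agree by commutativity.

This pointwise algebra is `assoc_iff`; the unit axioms are compared in `unit_iff`, where
`∂_1 ∂_α ∂_β F = η_{αβ}` gives `H^α_{1β} = δ^α_β`. The analytic input consists of the symmetry of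
second derivatives (`pd_comm`, `pd3_comm`) and the chain rule along the projection (`pd_prj`).
-/

/-!
STATEMENT 0: Given a Frobenius manifold potential `F` on `M` (WDVV equations + unit
condition w.r.t. a symmetric non-degenerate matrix `η`), and setting
`F^α := η^{αμ} ∂F/∂t^μ`, a function `F^o` analytic on `M×U` satisfies the open WDVV
equations together with the unit condition if and only if the `(N+1)`-tuple
`(F^1,…,F^N,F^o)` is a vector potential of a flat F-manifold on `M×U`.
-/

noncomputable section

/-- Points of ℂ^n. -/
abbrev Pt (n : ℕ) := Fin n → ℂ

/-- Functions on ℂ^n. -/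
abbrev Fn (n : ℕ) := (Fin n → ℂ) → ℂ

/-- Partial derivative ∂f/∂t^i. -/
noncomputable def pd {n : ℕ} (i : Fin n) (f : Fn n) : Fn n :=
  fun x => fderiv ℂ f x (Pi.single i 1)

/-- Projection to the first N coordinates. -/
def prj {N : ℕ} (x : Pt (N + 1)) : Pt N := fun i => x i.castSucc

/-! ### Partial derivatives of analytic functions -/

lemma pd_congr {n : ℕ} {f g : Fn n} {x : Pt n} (h : f =ᶠ[nhds x] g) (i : Fin n) :
    pd i f x = pd i g x := by
  simp only [pd, h.fderiv_eq]

lemma pd_analyticAt {n : ℕ} {f : Fn n} {x : Pt n} (h : AnalyticAt ℂ f x) (i : Fin n) :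
    AnalyticAt ℂ (pd i f) x :=
  ((ContinuousLinearMap.apply ℂ ℂ (Pi.single i 1 : Pt n)).analyticAt _).comp h.fderiv

lemma pd_comm {n : ℕ} {f : Fn n} {x : Pt n} (h : AnalyticAt ℂ f x) (i j : Fin n) :
    pd i (pd j f) x = pd j (pd i f) x := by
  have key : ∀ i j : Fin n, pd i (pd j f) x
      = fderiv ℂ (fderiv ℂ f) x (Pi.single i 1) (Pi.single j 1) := by
    intro i j
    have hd : DifferentiableAt ℂ (fderiv ℂ f) x := h.fderiv.differentiableAt
    change fderiv ℂ (fun y => fderiv ℂ f y (Pi.single j 1)) x (Pi.single i 1) = _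
    rw [fderiv_clm_apply hd (differentiableAt_const _)]
    simp
  rw [key, key]
  have hs : IsSymmSndFDerivAt ℂ f x :=
    h.contDiffAt.isSymmSndFDerivAt (n := ⊤) (by simp)
  exact hs _ _

/-- Symmetry of third derivatives in the two innermost slots; together with `pd_comm` it makes
them totally symmetric. -/
lemma pd3_comm {n : ℕ} {f : Fn n} {x : Pt n} (h : AnalyticAt ℂ f x) (i j k : Fin n) :
    pd i (pd j (pd k f)) x = pd i (pd k (pd j f)) x :=
  pd_congr (h.eventually_analyticAt.mono fun _ hy => pd_comm hy j k) i

/-- `prj` as a continuous linear map. -/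
def prjL (N : ℕ) : Pt (N + 1) →L[ℂ] Pt N :=
  ContinuousLinearMap.pi fun i => ContinuousLinearMap.proj i.castSucc

lemma prjL_single_castSucc {N : ℕ} (i : Fin N) :
    prjL N (Pi.single i.castSucc 1) = Pi.single i 1 := by
  ext j
  simp [prjL, Pi.single_apply]

lemma prjL_single_last {N : ℕ} : prjL N (Pi.single (Fin.last N) 1) = 0 := by
  ext j
  simp [prjL]

/-- Chain rule along the projection: a linear combination of functions of `t^1, …, t^N` is
differentiated termwise. -/
lemma pd_prj {N : ℕ} (e : Fin N → ℂ) (g : Fin N → Fn N) (x : Pt (N + 1))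
    (hg : ∀ μ, AnalyticAt ℂ (g μ) (prj x)) (i : Fin (N + 1)) :
    pd i (fun y => ∑ μ, e μ * g μ (prj y)) x
      = ∑ μ, e μ * fderiv ℂ (g μ) (prj x) (prjL N (Pi.single i 1)) := by
  have h1 : ∀ μ, HasFDerivAt (fun y : Pt (N + 1) => e μ * g μ (prj y))
      (e μ • (fderiv ℂ (g μ) (prj x)).comp (prjL N)) x := by
    intro μ
    have hd := (hg μ).differentiableAt.hasFDerivAt
    exact (HasFDerivAt.comp x (f := prj) hd (prjL N).hasFDerivAt).const_mul (e μ)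
  have h2 := HasFDerivAt.fun_sum (u := Finset.univ) fun μ _ => h1 μ
  simp [pd, h2.fderiv]

/-- The Hessian of `F^α = ∑ e_μ ∂_μ F`: it vanishes in the `s`-directions. -/
lemma hess_vec {N : ℕ} {M : Set (Pt N)} (hM : IsOpen M) {F : Fn N}
    (hF : AnalyticOnNhd ℂ F M) (e : Fin N → ℂ) {x : Pt (N + 1)} (hx : prj x ∈ M) :
    (∀ β γ : Fin N, pd γ.castSucc (pd β.castSucc (fun y => ∑ μ, e μ * pd μ F (prj y))) x
      = ∑ μ, e μ * pd γ (pd β (pd μ F)) (prj x)) ∧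
    (∀ b, pd b (pd (Fin.last N) (fun y => ∑ μ, e μ * pd μ F (prj y))) x = 0) ∧
    (∀ b, pd (Fin.last N) (pd b (fun y => ∑ μ, e μ * pd μ F (prj y))) x = 0) := by
  have hev : ∀ᶠ y in nhds x, prj y ∈ M :=
    (prjL N).continuous.continuousAt.eventually (hM.mem_nhds hx)
  have hA : ∀ y : Pt N, y ∈ M → ∀ μ, AnalyticAt ℂ (pd μ F) y :=
    fun y hy μ => pd_analyticAt (hF y hy) μ
  have h1 : ∀ β : Fin N, pd β.castSucc (fun y => ∑ μ, e μ * pd μ F (prj y))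
      =ᶠ[nhds x] fun y => ∑ μ, e μ * pd β (pd μ F) (prj y) := by
    intro β
    filter_upwards [hev] with y hy
    rw [pd_prj e (fun μ => pd μ F) y (hA _ hy), prjL_single_castSucc]
    rfl
  have h2 : pd (Fin.last N) (fun y => ∑ μ, e μ * pd μ F (prj y))
      =ᶠ[nhds x] fun _ => 0 := by
    filter_upwards [hev] with y hy
    rw [pd_prj e (fun μ => pd μ F) y (hA _ hy), prjL_single_last]
    simp
  have h3 : ∀ b, pd b (pd (Fin.last N) (fun y => ∑ μ, e μ * pd μ F (prj y))) x = 0 := by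
    intro b
    rw [pd_congr h2]
    simp [pd]
  refine ⟨fun β γ => ?_, h3, fun b => ?_⟩
  · rw [pd_congr (h1 β), pd_prj e (fun μ => pd β (pd μ F)) x
      (fun μ => pd_analyticAt (hA _ hx μ) β), prjL_single_castSucc]
    rfl
  · refine Fin.lastCases (h3 _) (fun β => ?_) b
    rw [pd_congr (h1 β), pd_prj e (fun μ => pd β (pd μ F)) x
      (fun μ => pd_analyticAt (hA _ hx μ) β), prjL_single_last]
    simp

/-! ### Pointwise algebra -/

/-- Contracting `G` with `C^μ_{γδ} = η^{μν} c_{νγδ}` in the two index conventions. -/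
lemma contract {N : ℕ} {e : Fin N → Fin N → ℂ} {c : Fin N → Fin N → Fin N → ℂ}
    (he : ∀ i j, e i j = e j i) (hc1 : ∀ i j k, c i j k = c j i k)
    (hc2 : ∀ i j k, c i j k = c i k j) (v : Fin N → ℂ) (γ δ : Fin N) :
    ∑ μ, v μ * ∑ ν, e μ ν * c ν γ δ = ∑ μ, ∑ ν, c γ δ μ * e μ ν * v ν := by
  rw [Finset.sum_comm]
  refine Finset.sum_congr rfl fun μ _ => ?_
  rw [Finset.mul_sum]
  refine Finset.sum_congr rfl fun ν _ => ?_
  rw [he μ ν, hc1 ν γ δ, hc2 γ ν δ]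
  ring

/-- The equivalence of the open WDVV equations with associativity, at one point. Here
`c i j k`, `G i j` and `H a b c` stand for `∂_i ∂_j ∂_k F`, `∂_i ∂_j F^o` and `∂_b ∂_c F^a`. -/
lemma assoc_iff {N : ℕ} {e : Fin N → Fin N → ℂ} {c : Fin N → Fin N → Fin N → ℂ}
    {G : Fin (N + 1) → Fin (N + 1) → ℂ} {H : Fin (N + 1) → Fin (N + 1) → Fin (N + 1) → ℂ}
    (he : ∀ i j, e i j = e j i) (hc1 : ∀ i j k, c i j k = c j i k)
    (hc2 : ∀ i j k, c i j k = c i k j) (hG : ∀ i j, G i j = G j i)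
    (hW : ∀ α β γ δ, ∑ μ, ∑ ν, c α β μ * e μ ν * c ν γ δ
      = ∑ μ, ∑ ν, c δ β μ * e μ ν * c ν γ α)
    (hH : ∀ α β γ : Fin N, H α.castSucc β.castSucc γ.castSucc = ∑ μ, e α μ * c μ β γ)
    (hl : ∀ (α : Fin N) b, H α.castSucc (Fin.last N) b = 0)
    (hr : ∀ (α : Fin N) b, H α.castSucc b (Fin.last N) = 0)
    (hL : ∀ a b, H (Fin.last N) a b = G a b) :
    ((∀ α β γ : Fin N,
        ∑ μ, ∑ ν, c α β μ * e μ ν * G ν.castSucc γ.castSucc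
          + G α.castSucc β.castSucc * G (Fin.last N) γ.castSucc =
        ∑ μ, ∑ ν, c γ β μ * e μ ν * G ν.castSucc α.castSucc
          + G γ.castSucc β.castSucc * G (Fin.last N) α.castSucc) ∧
     (∀ α β : Fin N,
        ∑ μ, ∑ ν, c α β μ * e μ ν * G ν.castSucc (Fin.last N)
          + G α.castSucc β.castSucc * G (Fin.last N) (Fin.last N) =
        G (Fin.last N) β.castSucc * G (Fin.last N) α.castSucc))
    ↔ ∀ α β γ δ : Fin (N + 1),
        ∑ μ, H α β μ * H μ γ δ = ∑ μ, H α γ μ * H μ β δ := by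
  have hCC : ∀ α β γ δ : Fin N,
      ∑ μ, (∑ σ, e α σ * c σ β μ) * (∑ ν, e μ ν * c ν γ δ)
        = ∑ σ, e α σ * ∑ μ, ∑ ν, c β σ μ * e μ ν * c ν δ γ := by
    intro α β γ δ
    simp only [Finset.sum_mul]
    rw [Finset.sum_comm]
    refine Finset.sum_congr rfl fun σ _ => ?_
    rw [Finset.mul_sum]
    refine Finset.sum_congr rfl fun μ _ => ?_
    simp only [Finset.mul_sum]
    refine Finset.sum_congr rfl fun ν _ => ?_
    rw [hc1 β σ μ, hc2 ν δ γ]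
    ring
  have hV : ∀ (b : Fin (N + 1)) (γ δ : Fin N),
      ∑ μ : Fin N, G b μ.castSucc * ∑ ν, e μ ν * c ν γ δ
        = ∑ μ, ∑ ν, c γ δ μ * e μ ν * G ν.castSucc b := by
    intro b γ δ
    rw [contract he hc1 hc2 (fun μ => G b μ.castSucc)]
    simp only [hG b]
  constructor
  · rintro ⟨h1, h2⟩ α β γ δ
    rw [Fin.sum_univ_castSucc, Fin.sum_univ_castSucc]
    induction α using Fin.lastCases with
    | cast α =>
      simp only [hr, zero_mul, add_zero]
      induction δ using Fin.lastCases with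
      | last => simp [hr]
      | cast δ =>
        induction β using Fin.lastCases with
        | last => simp [hl]
        | cast β =>
          induction γ using Fin.lastCases with
          | last => simp [hl]
          | cast γ =>
            simp only [hH, hCC]
            refine Finset.sum_congr rfl fun σ _ => ?_
            rw [hW β σ δ γ]
    | last =>
      simp only [hL]
      induction δ using Fin.lastCases with
      | last =>
        simp only [hr, mul_zero, Finset.sum_const_zero, zero_add]
        ring
      | cast δ =>
        induction β using Fin.lastCases with
        | last =>
          induction γ using Fin.lastCases with
          | last => rfl
          | cast γ =>
            simp only [hH, hl, hV, mul_zero, Finset.sum_const_zero, zero_add]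
            rw [hG γ.castSucc (Fin.last N)]
            linear_combination h2 γ δ
        | cast β =>
          induction γ using Fin.lastCases with
          | last =>
            simp only [hH, hl, hV, mul_zero, Finset.sum_const_zero, zero_add]
            rw [hG β.castSucc (Fin.last N)]
            linear_combination -h2 β δ
          | cast γ =>
            simp only [hH, hV]
            rw [hG β.castSucc (Fin.last N), hG γ.castSucc (Fin.last N)]
            linear_combination h1 γ δ β
  · intro h
    refine ⟨fun α β γ => ?_, fun α β => ?_⟩
    · have := h (Fin.last N) γ.castSucc α.castSucc β.castSucc
      rw [Fin.sum_univ_castSucc, Fin.sum_univ_castSucc] at this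
      simp only [hL, hH, hV] at this
      rw [hG γ.castSucc (Fin.last N), hG α.castSucc (Fin.last N)] at this
      linear_combination this
    · have := h (Fin.last N) (Fin.last N) α.castSucc β.castSucc
      rw [Fin.sum_univ_castSucc, Fin.sum_univ_castSucc] at this
      simp only [hL, hH, hV, hl, mul_zero, Finset.sum_const_zero, zero_add] at this
      rw [hG α.castSucc (Fin.last N)] at this
      linear_combination this

/-- The equivalence of the two unit conditions at one point; `o` is the unit direction and
`H a b` stands for `∂_o ∂_b F^a`. -/
lemma unit_iff {N : ℕ} {o : Fin (N + 1)} {G : Fin (N + 1) → Fin (N + 1) → ℂ}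
    {H : Fin (N + 1) → Fin (N + 1) → ℂ}
    (hH : ∀ α β : Fin N, H α.castSucc β.castSucc = if α = β then 1 else 0)
    (hr : ∀ α : Fin N, H α.castSucc (Fin.last N) = 0)
    (hL : ∀ b, H (Fin.last N) b = G o b) :
    ((∀ α : Fin N, G o α.castSucc = 0) ∧ G o (Fin.last N) = 1)
    ↔ ∀ α β : Fin (N + 1), H α β = if α = β then 1 else 0 := by
  constructor
  · rintro ⟨h1, h2⟩ α β
    induction α using Fin.lastCases with
    | cast α =>
      induction β using Fin.lastCases with
      | cast β => simp [hH]
      | last => simp [hr]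
    | last =>
      induction β using Fin.lastCases with
      | cast β => simp [hL, h1, (Fin.castSucc_ne_last β).symm]
      | last => simp [hL, h2]
  · intro h
    refine ⟨fun α => ?_, ?_⟩
    · rw [← hL, h, if_neg (Fin.castSucc_ne_last α).symm]
    · rw [← hL, h, if_pos rfl]

/-! ### The equivalence -/

theorem stmt0 (N : ℕ) (hN : 0 < N)
    -- the metric η, symmetric and non-degenerate
    (η : Matrix (Fin N) (Fin N) ℂ) (hηsymm : η.IsSymm) (hηinv : IsUnit η.det)
    -- the domains
    (M : Set (Pt N)) (U : Set ℂ) (hM : IsOpen M) (hU : IsOpen U) (hMc : IsConnected M)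
    (MU : Set (Pt (N + 1))) (hMU : MU = {x | prj x ∈ M ∧ x (Fin.last N) ∈ U})
    -- the Frobenius manifold potential F
    (F : Fn N) (hFan : AnalyticOnNhd ℂ F M)
    (hWDVV : ∀ x ∈ M, ∀ α β γ δ' : Fin N,
      ∑ μ, ∑ ν, pd μ (pd β (pd α F)) x * η⁻¹ μ ν * pd δ' (pd γ (pd ν F)) x =
      ∑ μ, ∑ ν, pd μ (pd β (pd δ' F)) x * η⁻¹ μ ν * pd α (pd γ (pd ν F)) x)
    (hFunit : ∀ x ∈ M, ∀ α β : Fin N, pd β (pd α (pd ⟨0, hN⟩ F)) x = η α β)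
    -- the function F^o, analytic on M×U
    (Fo : Fn (N + 1)) (hFoan : AnalyticOnNhd ℂ Fo MU)
    -- the (N+1)-tuple (F^1, …, F^N, F^o), where F^α = η^{αμ} ∂F/∂t^μ
    (Fvec : Fin (N + 1) → Fn (N + 1))
    (hFvec : ∀ α : Fin N, Fvec α.castSucc = fun x => ∑ μ, η⁻¹ α μ * pd μ F (prj x))
    (hFvlast : Fvec (Fin.last N) = Fo) :
    -- open WDVV equations + unit condition
    ((∀ x ∈ MU, ∀ α β γ : Fin N,
        ∑ μ, ∑ ν, pd μ (pd β (pd α F)) (prj x) * η⁻¹ μ ν *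
            pd γ.castSucc (pd ν.castSucc Fo) x
          + pd β.castSucc (pd α.castSucc Fo) x * pd γ.castSucc (pd (Fin.last N) Fo) x =
        ∑ μ, ∑ ν, pd μ (pd β (pd γ F)) (prj x) * η⁻¹ μ ν *
            pd α.castSucc (pd ν.castSucc Fo) x
          + pd β.castSucc (pd γ.castSucc Fo) x * pd α.castSucc (pd (Fin.last N) Fo) x) ∧
     (∀ x ∈ MU, ∀ α β : Fin N,
        ∑ μ, ∑ ν, pd μ (pd β (pd α F)) (prj x) * η⁻¹ μ ν *
            pd (Fin.last N) (pd ν.castSucc Fo) x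
          + pd β.castSucc (pd α.castSucc Fo) x * pd (Fin.last N) (pd (Fin.last N) Fo) x =
        pd β.castSucc (pd (Fin.last N) Fo) x * pd α.castSucc (pd (Fin.last N) Fo) x) ∧
     (∀ x ∈ MU, ∀ α : Fin N,
        pd α.castSucc (pd (⟨0, Nat.succ_pos N⟩ : Fin (N + 1)) Fo) x = 0) ∧
     (∀ x ∈ MU, pd (Fin.last N) (pd (⟨0, Nat.succ_pos N⟩ : Fin (N + 1)) Fo) x = 1))
    ↔
    -- (F^1,…,F^N,F^o) is a vector potential of a flat F-manifold on M×U
    ((∀ x ∈ MU, ∀ α β : Fin (N + 1),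
        pd β (pd (⟨0, Nat.succ_pos N⟩ : Fin (N + 1)) (Fvec α)) x =
          if α = β then 1 else 0) ∧
     (∀ x ∈ MU, ∀ α β γ δ' : Fin (N + 1),
        ∑ μ, pd μ (pd β (Fvec α)) x * pd δ' (pd γ (Fvec μ)) x =
        ∑ μ, pd μ (pd γ (Fvec α)) x * pd δ' (pd β (Fvec μ)) x)) := by
  have hM' : ∀ x ∈ MU, prj x ∈ M := by
    subst hMU
    exact fun x hx => hx.1
  have ho : (⟨0, Nat.succ_pos N⟩ : Fin (N + 1)) = (⟨0, hN⟩ : Fin N).castSucc := rfl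
  have he : ∀ i j, η⁻¹ i j = η⁻¹ j i := by
    intro i j
    have : (η⁻¹).transpose = η⁻¹ := by rw [Matrix.transpose_nonsing_inv, hηsymm.eq]
    exact congrFun (congrFun this j) i
  have hinv : η⁻¹ * η = 1 := Matrix.nonsing_inv_mul η hηinv
  have hc1 : ∀ x ∈ MU, ∀ i j k : Fin N,
      pd k (pd j (pd i F)) (prj x) = pd k (pd i (pd j F)) (prj x) :=
    fun x hx i j k => pd3_comm (hFan _ (hM' x hx)) k j i
  have hc2 : ∀ x ∈ MU, ∀ i j k : Fin N,
      pd k (pd j (pd i F)) (prj x) = pd j (pd k (pd i F)) (prj x) :=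
    fun x hx i j k => pd_comm (pd_analyticAt (hFan _ (hM' x hx)) i) k j
  have hG : ∀ x ∈ MU, ∀ i j, pd j (pd i Fo) x = pd i (pd j Fo) x :=
    fun x hx i j => pd_comm (hFoan x hx) j i
  have hv : ∀ x ∈ MU, ∀ α : Fin N,
      (∀ β γ : Fin N, pd γ.castSucc (pd β.castSucc (Fvec α.castSucc)) x
        = ∑ μ, η⁻¹ α μ * pd γ (pd β (pd μ F)) (prj x)) ∧
      (∀ b, pd b (pd (Fin.last N) (Fvec α.castSucc)) x = 0) ∧
      (∀ b, pd (Fin.last N) (pd b (Fvec α.castSucc)) x = 0) := by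
    intro x hx α
    rw [hFvec]
    exact hess_vec hM hFan (fun μ => η⁻¹ α μ) (hM' x hx)
  have hassoc := fun x (hx : x ∈ MU) =>
    assoc_iff (e := fun i j => η⁻¹ i j) (c := fun i j k => pd k (pd j (pd i F)) (prj x))
      (G := fun i j => pd j (pd i Fo) x) (H := fun a b c => pd c (pd b (Fvec a)) x)
      he (hc1 x hx) (hc2 x hx) (hG x hx) (hWDVV _ (hM' x hx))
      (fun α => (hv x hx α).1) (fun α => (hv x hx α).2.1) (fun α => (hv x hx α).2.2)
      (fun a b => by rw [hFvlast])
  have hunit := fun x (hx : x ∈ MU) =>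
    unit_iff (o := ⟨0, Nat.succ_pos N⟩) (G := fun i j => pd j (pd i Fo) x)
      (H := fun a b => pd b (pd ⟨0, Nat.succ_pos N⟩ (Fvec a)) x)
      (fun α β => by
        rw [ho, (hv x hx α).1, ← Matrix.one_apply, ← hinv, Matrix.mul_apply]
        refine Finset.sum_congr rfl fun μ _ => ?_
        rw [hc1 x hx, hFunit _ (hM' x hx)])
      (fun α => (hv x hx α).2.2 _)
      (fun b => by rw [hFvlast])
  constructor
  · rintro ⟨h1, h2, h3, h4⟩
    exact ⟨fun x hx => (hunit x hx).1 ⟨h3 x hx, h4 x hx⟩,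
      fun x hx => (hassoc x hx).1 ⟨h1 x hx, h2 x hx⟩⟩
  · rintro ⟨hu, ha⟩
    exact ⟨fun x hx => ((hassoc x hx).2 (ha x hx)).1, fun x hx => ((hassoc x hx).2 (ha x hx)).2,
      fun x hx => ((hunit x hx).2 (hu x hx)).1, fun x hx => ((hunit x hx).2 (hu x hx)).2⟩

end
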